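/- Let L be a finite-dimensional Leibniz algebra over ℂ with L = G ⊕ I as vector spaces, where G is a subalgebra of L that is a simple Lie algebra under the restricted bracket and I is the ideal generated by squares (so that the quotient L/I is isomorphic to the simple Lie algebra G). Then every derivation d of L can be written as d = R_a + α + Δ, where a ∈ G, α : L → L is linear with α(G) = 0 and α(I) ⊆ I, Δ : L → L is linear with Δ(I) = 0 and Δ(G) ⊆ I, and α([x,y]) = [α(x),y] for all x,y ∈ L. Moreover, I decomposes as a direct sum I = I_1 ⊕ … ⊕ I_s of subspaces each of which is irreducible under the right action of G (v ↦ [v,g]), and writing α_{i,j} = π_j ∘ (α restricted to I_i), where π_j is the projection of I onto I_j, the diagonal components satisfy α_{i,i} = λ_i·id on I_i for some scalars λ_i ∈ ℂ. -/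

import Mathlib

/-!
Write `I` for the ideal of squares. The Leibniz identity gives `[x, [y, y]] = 0`, so right
multiplication by elements of `I` vanishes (`br_squaresIdeal_eq_zero`), while every derivation
preserves `I` (`derivation_mem_squaresIdeal`). Hence the `G`-component of `d` on `G` is a derivation
of the simple Lie algebra `G`, and so equals `[·, a]` for some `a ∈ G`
(`exists_inner_of_derivation`). The derivation `d' = d - R_a` maps `L` into `I`; `α` and `Δ` are
`d'` composed with the projections onto `I` and `G`. For `v ∈ I` and `y ∈ L` the term `[v, d' y]`
of the derivation rule vanishes because `d' y ∈ I`, which says that `α` commutes with right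
multiplications.

The splitting of `I` into irreducibles is Weyl's complete reducibility theorem
(`weyl_complementedLattice`), proved here for a simple Lie algebra over a field of characteristic
zero. It follows from Whitehead's first lemma (`whitehead_first`): every `1`-cocycle with values in a
finite-dimensional module is a coboundary. On an irreducible module either the trace form vanishes
and Cartan's criterion makes the action trivial, or the trace form is nondegenerate and its Casimir
operator is invertible by Schur's lemma, having trace `dim 𝔤 ≠ 0`; the Casimir operator then yields a
primitive of the cocycle (`whitehead_irreducible`). The diagonal components of `α` are scalars by
Schur's lemma (`schur_component`).
-/

/-- `J` is a (two-sided) ideal of the Leibniz algebra `(L, br)`. -/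
def IsLeibnizIdeal {L : Type*} [AddCommGroup L] [Module ℂ L]
    (br : L →ₗ[ℂ] L →ₗ[ℂ] L) (J : Submodule ℂ L) : Prop :=
  (∀ a ∈ J, ∀ y : L, br a y ∈ J) ∧ (∀ a ∈ J, ∀ y : L, br y a ∈ J)

/-- The ideal of the Leibniz algebra `(L, br)` generated by the squares `[x,x]`. -/
def squaresIdeal {L : Type*} [AddCommGroup L] [Module ℂ L]
    (br : L →ₗ[ℂ] L →ₗ[ℂ] L) : Submodule ℂ L :=
  sInf {J | (∀ x : L, br x x ∈ J) ∧ IsLeibnizIdeal br J}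

/-- `W` is an irreducible `G`-submodule under the right action `v ↦ [v,g]`. -/
def IsIrreducibleRightModule {L : Type*} [AddCommGroup L] [Module ℂ L]
    (br : L →ₗ[ℂ] L →ₗ[ℂ] L) (G : Submodule ℂ L) (W : Submodule ℂ L) : Prop :=
  W ≠ ⊥ ∧ (∀ v ∈ W, ∀ g ∈ G, br v g ∈ W) ∧
  ∀ W' : Submodule ℂ L, W' ≤ W → (∀ v ∈ W', ∀ g ∈ G, br v g ∈ W') → W' = ⊥ ∨ W' = W

section Weyl

/-! ### Whitehead's first lemma and Weyl's theorem -/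

open LieModule Module

/-- The canonical invariant tensor `∑ bᵢ ⊗ bⁱ` of an invariant form is annihilated by every
`x ∈ 𝔤`, expressed by pairing it with an arbitrary bilinear map `β`. -/
lemma casimir_tensor_invariant {K 𝔤 V ι : Type*} [Field K] [LieRing 𝔤] [LieAlgebra K 𝔤]
    [AddCommGroup V] [Module K V] [Fintype ι] [DecidableEq ι]
    (B : LinearMap.BilinForm K 𝔤) (hB : B.Nondegenerate) (hsymm : ∀ x y, B x y = B y x)
    (hinv : ∀ x y z : 𝔤, B ⁅x, y⁆ z = - B y ⁅x, z⁆)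
    (b : Basis ι K 𝔤) (β : 𝔤 →ₗ[K] 𝔤 →ₗ[K] V) (x : 𝔤) :
    ∑ i, (β ⁅x, b i⁆ (B.dualBasis hB b i) + β (b i) ⁅x, B.dualBasis hB b i⁆) = 0 := by
  set b' := B.dualBasis hB b with hb'
  have expand' (y : 𝔤) : y = ∑ j, B y (b j) • b' j := by
    conv_lhs => rw [← b'.sum_repr y]
    simp [hb', LinearMap.BilinForm.dualBasis_repr_apply]
  have expand (y : 𝔤) : y = ∑ j, B y (b' j) • b j := by
    have key (j : ι) : b.repr y j = B y (b' j) := by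
      rw [hsymm]
      conv_rhs => rw [← b.sum_repr y, map_sum]
      simp [hb', LinearMap.BilinForm.apply_dualBasis_left]
    conv_lhs => rw [← b.sum_repr y]
    simp [key]
  have h1 (i : ι) : β ⁅x, b i⁆ (b' i) = ∑ j, B ⁅x, b i⁆ (b' j) • β (b j) (b' i) := by
    conv_lhs => rw [expand ⁅x, b i⁆]
    simp
  have h2 (i : ι) : β (b i) ⁅x, b' i⁆ = ∑ j, B ⁅x, b' i⁆ (b j) • β (b i) (b' j) := by
    conv_lhs => rw [expand' ⁅x, b' i⁆]
    simp
  simp_rw [Finset.sum_add_distrib, h1, h2]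
  nth_rewrite 2 [Finset.sum_comm]
  simp_rw [← Finset.sum_add_distrib, ← add_smul, hinv x (b _) (b' _), hsymm (b _) ⁅x, b' _⁆]
  simp

variable {K 𝔤 : Type*} [Field K] [LieRing 𝔤] [LieAlgebra K 𝔤] [LieAlgebra.IsSimple K 𝔤]

lemma derivedSeries_one_eq_top : LieAlgebra.derivedSeries K 𝔤 1 = ⊤ := by
  refine (LieAlgebra.IsSimple.eq_bot_or_eq_top _).resolve_left fun h => ?_
  refine LieAlgebra.IsSimple.non_abelian K (L := 𝔤) ?_
  rw [← LieAlgebra.abelian_iff_derived_one_eq_bot] at h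
  have h' : IsLieAbelian (⊤ : LieIdeal K 𝔤) := h
  exact (lie_abelian_iff_equiv_lie_abelian LieIdeal.topEquiv (R := K)).mp h'

lemma traceForm_nondegenerate_of_ne_zero [FiniteDimensional K 𝔤] {M : Type*} [AddCommGroup M]
    [Module K M] [LieRingModule 𝔤 M] [LieModule K 𝔤 M] (h : traceForm K 𝔤 M ≠ 0) :
    (traceForm K 𝔤 M).Nondegenerate := by
  -- The radical of an invariant form is an ideal, hence `⊥` or `⊤`.
  let J : LieIdeal K 𝔤 :=
    { LinearMap.ker (traceForm K 𝔤 M) with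
      lie_mem := by
        intro x y hy
        change traceForm K 𝔤 M ⁅x, y⁆ = 0
        have hy' : traceForm K 𝔤 M y = 0 := hy
        ext z
        rw [traceForm_apply_lie_apply', hy']
        simp }
  have hJ : ∀ x, x ∈ J ↔ traceForm K 𝔤 M x = 0 := fun x => Iff.rfl
  rcases LieAlgebra.IsSimple.eq_bot_or_eq_top J with hb | ht
  · rw [LinearMap.BilinForm.nondegenerate_iff_ker_eq_bot, LinearMap.ker_eq_bot']
    intro x hx
    have : x ∈ J := hx
    simpa [hb] using this
  · exact absurd (LinearMap.ext fun x => (hJ x).mp (ht ▸ LieSubmodule.mem_top x)) h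

variable [CharZero K]

/-- An irreducible module whose trace form vanishes is trivial, by Cartan's criterion. -/
lemma isTrivial_of_traceForm_eq_zero {M : Type*} [AddCommGroup M] [Module K M]
    [LieRingModule 𝔤 M] [LieModule K 𝔤 M] [FiniteDimensional K M]
    [LieModule.IsIrreducible K 𝔤 M] (h : traceForm K 𝔤 M = 0) (x : 𝔤) (m : M) : ⁅x, m⁆ = 0 := by
  have hn := isNilpotent_derivedSeries_of_traceForm_eq_zero h
  rw [derivedSeries_one_eq_top] at hn
  have hn' : LieModule.IsNilpotent 𝔤 M := LieModule.isNilpotent_of_top_iff (R := K).mp hn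
  have : Nontrivial M := nontrivial_of_isIrreducible K 𝔤 M
  have := nontrivial_max_triv_of_isNilpotent K 𝔤 M
  have ht := LieSubmodule.eq_top_of_isIrreducible K 𝔤 M (maxTrivSubmodule K 𝔤 M)
  have hm : m ∈ maxTrivSubmodule K 𝔤 M := ht ▸ LieSubmodule.mem_top m
  exact (mem_maxTrivSubmodule K 𝔤 M m).mp hm x

variable [FiniteDimensional K 𝔤]

/-- Whitehead's first lemma for irreducible modules. Unless the module is trivial, its Casimir
operator `c` is invertible, and `x · (∑ bᵢ · f bⁱ) = c (f x)` exhibits `f` as a coboundary. -/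
lemma whitehead_irreducible {M : Type*} [AddCommGroup M] [Module K M]
    [LieRingModule 𝔤 M] [LieModule K 𝔤 M] [FiniteDimensional K M] [LieModule.IsIrreducible K 𝔤 M]
    (f : 𝔤 →ₗ[K] M) (hf : ∀ x y, f ⁅x, y⁆ = ⁅x, f y⁆ - ⁅y, f x⁆) :
    ∃ m : M, ∀ x, f x = ⁅x, m⁆ := by
  classical
  by_cases h0 : traceForm K 𝔤 M = 0
  · have htriv := isTrivial_of_traceForm_eq_zero (K := K) (𝔤 := 𝔤) (M := M) h0
    refine ⟨0, fun x => ?_⟩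
    rw [lie_zero]
    -- `f` vanishes on brackets, and these span `𝔤`.
    have hx : x ∈ LieAlgebra.derivedSeries K 𝔤 1 := by
      rw [derivedSeries_one_eq_top]; exact LieSubmodule.mem_top x
    rw [LieAlgebra.derivedSeries_def, LieAlgebra.derivedSeriesOfIdeal_succ,
      LieAlgebra.derivedSeriesOfIdeal_zero, ← LieSubmodule.mem_toSubmodule,
      LieSubmodule.lieIdeal_oper_eq_linear_span'] at hx
    induction hx using Submodule.span_induction with
    | mem x hx =>
      obtain ⟨y, -, z, -, rfl⟩ := hx
      rw [hf, htriv, htriv, sub_zero]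
    | zero => simp
    | add x y _ _ hx hy => rw [map_add, hx, hy, add_zero]
    | smul a x _ hx => rw [map_smul, hx, smul_zero]
  · have hB := traceForm_nondegenerate_of_ne_zero h0
    set B := traceForm K 𝔤 M with hBdef
    let b := Module.finBasis K 𝔤
    set b' := B.dualBasis hB b with hb'
    have tens {V : Type _} [AddCommGroup V] [Module K V] (β : 𝔤 →ₗ[K] 𝔤 →ₗ[K] V) (x : 𝔤) :=
      casimir_tensor_invariant B hB (traceForm_comm K 𝔤 M) (traceForm_apply_lie_apply' K 𝔤 M) b β x
    let c : M →ₗ[K] M := ∑ i, toEnd K 𝔤 M (b i) ∘ₗ toEnd K 𝔤 M (b' i)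
    have hc (m : M) : c m = ∑ i, ⁅b i, ⁅b' i, m⁆⁆ := by simp [c]
    have hcomm (x : 𝔤) (m : M) : c ⁅x, m⁆ = ⁅x, c m⁆ := by
      let β : 𝔤 →ₗ[K] 𝔤 →ₗ[K] M :=
        (toEnd K 𝔤 M : 𝔤 →ₗ[K] End K M).compl₂ ((toEnd K 𝔤 M : 𝔤 →ₗ[K] End K M).flip m)
      have hβ (y z : 𝔤) : β y z = ⁅y, ⁅z, m⁆⁆ := rfl
      have := tens β x
      simp only [hβ, ← hb'] at this
      rw [hc, hc, lie_sum, ← sub_eq_zero, ← neg_eq_zero, ← this, ← Finset.sum_sub_distrib,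
        ← Finset.sum_neg_distrib]
      refine Finset.sum_congr rfl fun i _ => ?_
      simp only [lie_lie, lie_sub]
      abel
    have htr : LinearMap.trace K M c = (Module.finrank K 𝔤 : K) := by
      have : ∀ i, LinearMap.trace K M (toEnd K 𝔤 M (b i) ∘ₗ toEnd K 𝔤 M (b' i)) = 1 := by
        intro i
        rw [← traceForm_apply_apply, traceForm_comm, ← hBdef, hb',
          LinearMap.BilinForm.apply_dualBasis_left, if_pos rfl]
      simp [c, this]
    have : Nontrivial 𝔤 := LieAlgebra.IsSimple.nontrivial K 𝔤
    have hc0 : c ≠ 0 := by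
      intro h
      rw [h, map_zero] at htr
      exact Module.finrank_pos.ne' (by exact_mod_cast htr.symm : Module.finrank K 𝔤 = 0)
    -- Schur's lemma: the kernel of `c` is a submodule different from `⊤`.
    let N : LieSubmodule K 𝔤 M :=
      { LinearMap.ker c with
        lie_mem := by
          intro x m hm
          change c ⁅x, m⁆ = 0
          rw [hcomm, show c m = 0 from hm, lie_zero] }
    have hN : ∀ m, m ∈ N ↔ c m = 0 := fun m => Iff.rfl
    have hker : LinearMap.ker c = ⊥ := by
      rcases IsSimpleOrder.eq_bot_or_eq_top N with h | h
      · rw [LinearMap.ker_eq_bot']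
        intro m hm
        simpa [h] using (hN m).mpr hm
      · exact absurd (LinearMap.ext fun m => (hN m).mp (h ▸ LieSubmodule.mem_top m)) hc0
    have hinj : Function.Injective c := LinearMap.ker_eq_bot.mp hker
    have hsurj : Function.Surjective c := LinearMap.injective_iff_surjective.mp hinj
    obtain ⟨m, hm⟩ := hsurj (∑ i, ⁅b i, f (b' i)⁆)
    refine ⟨m, fun x => hinj ?_⟩
    rw [hcomm, hm, hc, lie_sum]
    let β : 𝔤 →ₗ[K] 𝔤 →ₗ[K] M := (toEnd K 𝔤 M : 𝔤 →ₗ[K] End K M).compl₂ f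
    have hβ (y z : 𝔤) : β y z = ⁅y, f z⁆ := rfl
    have := tens β x
    simp only [hβ, ← hb'] at this
    rw [← sub_eq_zero, ← neg_eq_zero, ← this, ← Finset.sum_sub_distrib,
      ← Finset.sum_neg_distrib]
    refine Finset.sum_congr rfl fun i _ => ?_
    rw [hf]
    simp only [lie_lie, lie_sub]
    abel

/-- Whitehead's first lemma: every `1`-cocycle with values in a finite-dimensional module is a
coboundary. By induction on the dimension this reduces to irreducible modules. -/
lemma whitehead_first (n : ℕ) : ∀ (M : Type*) [AddCommGroup M] [Module K M]
    [LieRingModule 𝔤 M] [LieModule K 𝔤 M] [FiniteDimensional K M],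
    finrank K M = n → ∀ (f : 𝔤 →ₗ[K] M), (∀ x y, f ⁅x, y⁆ = ⁅x, f y⁆ - ⁅y, f x⁆) →
    ∃ m : M, ∀ x, f x = ⁅x, m⁆ := by
  induction n using Nat.strong_induction_on with
  | _ n ih =>
  intro M _ _ _ _ _ hn f hf
  rcases subsingleton_or_nontrivial M with hM | hM
  · exact ⟨0, fun x => Subsingleton.elim _ _⟩
  by_cases hirr : LieModule.IsIrreducible K 𝔤 M
  · exact whitehead_irreducible f hf
  obtain ⟨N, hbot, htop⟩ : ∃ N : LieSubmodule K 𝔤 M, N ≠ ⊥ ∧ N ≠ ⊤ := by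
    by_contra! h
    exact hirr (LieModule.IsIrreducible.mk h)
  have hlt : finrank K N < n := by
    rw [← hn]
    refine Submodule.finrank_lt (s := (N : Submodule K M)) ?_
    exact fun h => htop ((LieSubmodule.toSubmodule_eq_top N).mp h)
  have hpos : 0 < finrank K N := by
    have : Nontrivial N := (LieSubmodule.nontrivial_iff_ne_bot K 𝔤 M).mpr hbot
    exact Module.finrank_pos
  have hltq : finrank K (M ⧸ N) < n := by
    have h1 : finrank K (M ⧸ N) + finrank K N = finrank K M :=
      Submodule.finrank_quotient_add_finrank (N : Submodule K M)
    omega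
  have : FiniteDimensional K (M ⧸ N) :=
    inferInstanceAs (FiniteDimensional K (M ⧸ (N : Submodule K M)))
  let π := LieSubmodule.Quotient.mk' N
  obtain ⟨mq, hmq⟩ := ih _ hltq (M ⧸ N) rfl ((π : M →ₗ[K] M ⧸ N) ∘ₗ f) (by
    intro x y
    simp [hf])
  obtain ⟨m, rfl⟩ := LieSubmodule.Quotient.surjective_mk' N mq
  have hmem (x : 𝔤) : f x - ⁅x, m⁆ ∈ N := by
    rw [← LieSubmodule.Quotient.mk_eq_zero']
    have h := hmq x
    change π (f x) = ⁅x, π m⁆ at h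
    change π (f x - ⁅x, m⁆) = 0
    rw [map_sub, h, LieModuleHom.map_lie, sub_self]
  let g : 𝔤 →ₗ[K] N :=
    LinearMap.codRestrict (N : Submodule K M)
      (f - (toEnd K 𝔤 M : 𝔤 →ₗ[K] End K M).flip m) hmem
  have hg (x : 𝔤) : ((g x : N) : M) = f x - ⁅x, m⁆ := rfl
  obtain ⟨m', hm'⟩ := ih _ hlt N rfl g (by
    intro x y
    apply Subtype.ext
    rw [LieSubmodule.coe_sub, LieSubmodule.coe_bracket, LieSubmodule.coe_bracket, hg, hg, hg, hf]
    simp only [lie_sub, lie_lie]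
    abel)
  refine ⟨m + m', fun x => ?_⟩
  have h := congrArg (Subtype.val) (hm' x)
  rw [hg, LieSubmodule.coe_bracket] at h
  rw [lie_add, ← h]
  abel

/-- Weyl's complete reducibility theorem. For a linear projection `p` of `V` onto `N`, the map
`x ↦ ⁅x, p⁆` is a cocycle with values in the module `P` of endomorphisms that vanish on `N` and
map into `N`; correcting `p` by a primitive of this cocycle gives an equivariant projection. -/
theorem weyl_complementedLattice (V : Type*) [AddCommGroup V] [Module K V]
    [LieRingModule 𝔤 V] [LieModule K 𝔤 V] [FiniteDimensional K V] :
    ComplementedLattice (LieSubmodule K 𝔤 V) := by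
  refine ⟨fun N => ?_⟩
  obtain ⟨C, hC⟩ := Submodule.exists_isCompl (N : Submodule K V)
  let p : V →ₗ[K] V := (N : Submodule K V).projection C hC
  have hpN (v : V) (hv : v ∈ N) : p v = v := by
    exact Submodule.projection_apply_of_mem_left hC hv
  have hpm (v : V) : p v ∈ N :=
    Submodule.projection_apply_mem hC v
  let P : LieSubmodule K 𝔤 (V →ₗ[K] V) :=
    { carrier := {φ | (∀ v, φ v ∈ N) ∧ ∀ v ∈ N, φ v = 0}
      add_mem' := fun {a b} ha hb => ⟨fun v => N.add_mem (ha.1 v) (hb.1 v), fun v hv => by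
        simp [ha.2 v hv, hb.2 v hv]⟩
      zero_mem' := ⟨fun v => N.zero_mem, fun v _ => rfl⟩
      smul_mem' := fun k a ha => ⟨fun v => N.smul_mem k (ha.1 v), fun v hv => by
        simp [ha.2 v hv]⟩
      lie_mem := fun {x a} ha => ⟨fun v => by
        rw [LieHom.lie_apply]
        exact N.sub_mem (N.lie_mem (ha.1 v)) (ha.1 _), fun v hv => by
        rw [LieHom.lie_apply, ha.2 v hv, ha.2 _ (N.lie_mem hv), lie_zero, sub_zero]⟩ }
  have hP (x : 𝔤) : ⁅x, p⁆ ∈ P := by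
    refine ⟨fun v => ?_, fun v hv => ?_⟩
    · rw [LieHom.lie_apply]
      exact N.sub_mem (N.lie_mem (hpm v)) (hpm _)
    · rw [LieHom.lie_apply, hpN v hv, hpN _ (N.lie_mem hv), sub_self]
  let f : 𝔤 →ₗ[K] P := LinearMap.codRestrict (P : Submodule K (V →ₗ[K] V))
    ((toEnd K 𝔤 (V →ₗ[K] V) : 𝔤 →ₗ[K] End K (V →ₗ[K] V)).flip p) hP
  have hf (x : 𝔤) : ((f x : P) : V →ₗ[K] V) = ⁅x, p⁆ := rfl
  obtain ⟨m, hm⟩ := whitehead_first _ P rfl f (by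
    intro x y
    apply Subtype.ext
    rw [LieSubmodule.coe_sub, LieSubmodule.coe_bracket, LieSubmodule.coe_bracket, hf, hf, hf,
      lie_lie])
  obtain ⟨m, hmP⟩ := m
  have hq (x : 𝔤) (v : V) : ⁅x, p v - m v⁆ = p ⁅x, v⁆ - m ⁅x, v⁆ := by
    have h : ⁅x, p⁆ = ⁅x, m⁆ := congrArg Subtype.val (hm x)
    have h' := LinearMap.congr_fun h v
    rw [LieHom.lie_apply, LieHom.lie_apply] at h'
    rw [lie_sub, sub_eq_sub_iff_sub_eq_sub]
    exact h'
  let C' : LieSubmodule K 𝔤 V :=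
    { LinearMap.ker (p - m) with
      lie_mem := by
        intro x v hv
        change p ⁅x, v⁆ - m ⁅x, v⁆ = 0
        rw [← hq, show p v - m v = 0 from hv, lie_zero] }
  have hC' (v : V) : v ∈ C' ↔ p v - m v = 0 := Iff.rfl
  refine ⟨C', ?_, ?_⟩
  · rw [disjoint_iff, LieSubmodule.eq_bot_iff]
    rintro v ⟨hv, hv'⟩
    have := (hC' v).mp hv'
    rwa [hpN v hv, hmP.2 v hv, sub_zero] at this
  · rw [codisjoint_iff, eq_top_iff]
    intro v _
    rw [LieSubmodule.mem_sup]
    have hv : p v - m v ∈ N := N.sub_mem (hpm v) (hmP.1 v)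
    refine ⟨p v - m v, hv, v - (p v - m v), (hC' _).mpr ?_, by abel⟩
    have h1 := hpN _ hv
    have h2 := hmP.2 _ hv
    rw [map_sub p v, map_sub m v, h1, h2]
    abel

end Weyl

/-! ### The Leibniz algebra `L = G ⊕ I` -/

section Leibniz

variable {L : Type*} [AddCommGroup L] [Module ℂ L]
  (br : L →ₗ[ℂ] L →ₗ[ℂ] L)

/-- Right multiplication by an element of the ideal of squares vanishes. -/
lemma br_squaresIdeal_eq_zero
    (hLeib : ∀ x y z : L, br x (br y z) = br (br x y) z - br (br x z) y)
    (x v : L) (hv : v ∈ squaresIdeal br) : br x v = 0 := by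
  let J : Submodule ℂ L := LinearMap.ker br.flip
  have hJ (v : L) : v ∈ J ↔ ∀ x, br x v = 0 := by
    rw [LinearMap.mem_ker, LinearMap.ext_iff]
    rfl
  have hle : squaresIdeal br ≤ J := by
    refine sInf_le ⟨fun y => ?_, fun z hz y => ?_, fun z hz y => ?_⟩
    · exact (hJ _).mpr fun x => by rw [hLeib, sub_self]
    · rw [hJ] at hz ⊢
      intro x
      rw [hLeib, hz, hz, map_zero, LinearMap.zero_apply, sub_zero]
    · rw [hJ] at hz
      rw [hz]
      exact J.zero_mem
  exact (hJ v).mp (hle hv) x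

lemma br_self_mem_squaresIdeal (x : L) : br x x ∈ squaresIdeal br := by
  rw [squaresIdeal, Submodule.mem_sInf]
  exact fun J hJ => hJ.1 x

lemma isLeibnizIdeal_squaresIdeal : IsLeibnizIdeal br (squaresIdeal br) := by
  constructor
  all_goals
    intro a ha y
    rw [squaresIdeal, Submodule.mem_sInf] at ha ⊢
    intro J hJ
  · exact hJ.2.1 a (ha J hJ) y
  · exact hJ.2.2 a (ha J hJ) y

/-- A derivation preserves the ideal of squares, since `d [x,x] = [d x, x] + [x, d x]` is a
polarised square. -/
lemma derivation_mem_squaresIdeal (d : L →ₗ[ℂ] L)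
    (hd : ∀ x y : L, d (br x y) = br (d x) y + br x (d y)) (v : L) (hv : v ∈ squaresIdeal br) :
    d v ∈ squaresIdeal br := by
  have hI := isLeibnizIdeal_squaresIdeal br
  have hle : squaresIdeal br ≤ squaresIdeal br ⊓ (squaresIdeal br).comap d := by
    refine sInf_le ⟨fun x => ⟨br_self_mem_squaresIdeal br x, ?_⟩,
      fun z hz y => ⟨hI.1 z hz.1 y, ?_⟩, fun z hz y => ⟨hI.2 z hz.1 y, ?_⟩⟩
    · have h : d (br x x) = br (d x + x) (d x + x) - br (d x) (d x) - br x x := by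
        rw [hd]
        simp only [map_add, LinearMap.add_apply]
        abel
      change d (br x x) ∈ squaresIdeal br
      rw [h]
      exact Submodule.sub_mem _ (Submodule.sub_mem _ (br_self_mem_squaresIdeal br _)
        (br_self_mem_squaresIdeal br _)) (br_self_mem_squaresIdeal br _)
    · change d (br z y) ∈ squaresIdeal br
      rw [hd]
      exact Submodule.add_mem _ (hI.1 _ hz.2 y) (hI.1 _ hz.1 _)
    · change d (br y z) ∈ squaresIdeal br
      rw [hd]
      exact Submodule.add_mem _ (hI.2 _ hz.1 _) (hI.2 _ hz.2 _)
  exact (hle hv).2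

variable (hLeib : ∀ x y z : L, br x (br y z) = br (br x y) z - br (br x z) y)
  (G : Submodule ℂ L) (hGclosed : ∀ x ∈ G, ∀ y ∈ G, br x y ∈ G)
  (hGanti : ∀ x ∈ G, ∀ y ∈ G, br x y = - br y x)

/-- The Lie ring structure on `G` given by the restricted bracket. -/
abbrev subLieRing : LieRing G where
  bracket x y := ⟨br x y, hGclosed x x.2 y y.2⟩
  add_lie x y z := Subtype.ext (by simp)
  lie_add x y z := Subtype.ext (by simp)
  lie_self x := Subtype.ext (by
    have h := hGanti x x.2 x x.2
    have h2 : (2 : ℂ) • br (x : L) (x : L) = 0 := by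
      rw [two_smul]
      exact add_eq_zero_iff_eq_neg.mpr h
    exact (smul_eq_zero.mp h2).resolve_left two_ne_zero)
  leibniz_lie x y z := Subtype.ext (by
    change br x (br y z) = br (br x y) z + br y (br x z)
    rw [hLeib, hGanti y y.2 _ (hGclosed x x.2 z z.2), sub_eq_add_neg])

/-- `G` with its restricted bracket as a complex Lie algebra. -/
abbrev subLieAlgebra :
    letI := subLieRing br hLeib G hGclosed hGanti
    LieAlgebra ℂ G :=
  letI := subLieRing br hLeib G hGclosed hGanti
  { lie_smul := fun t x y => Subtype.ext (map_smul (br (x : L)) t (y : L)) }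

/-- The left `G`-action `g · v = -[v,g]` on `L` attached to the right action `v ↦ [v,g]`. -/
abbrev subLieRingModule :
    letI := subLieRing br hLeib G hGclosed hGanti
    LieRingModule G L :=
  letI := subLieRing br hLeib G hGclosed hGanti
  { bracket := fun g v => - br v g
    add_lie := fun x y v => by simp; abel
    lie_add := fun x v w => by simp; abel
    leibniz_lie := fun x y v => by
      change - br (- br v y) x = - br v (br x y) + - br (- br v x) y
      rw [hLeib]
      simp }

/-- The action `g · v = -[v,g]` is `ℂ`-bilinear. -/
abbrev subLieModule :
    letI := subLieRing br hLeib G hGclosed hGanti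
    letI := subLieAlgebra br hLeib G hGclosed hGanti
    letI := subLieRingModule br hLeib G hGclosed hGanti
    LieModule ℂ G L :=
  letI := subLieRing br hLeib G hGclosed hGanti
  letI := subLieAlgebra br hLeib G hGclosed hGanti
  letI := subLieRingModule br hLeib G hGclosed hGanti
  { smul_lie := fun t x v => by
      change - br v (t • (x : L)) = t • - br v x
      simp
    lie_smul := fun t x v => by
      change - br (t • v) x = t • - br v x
      simp }

lemma sub_isSimple
    (hGsimple :
        (∀ J : Submodule ℂ L, J ≤ G → (∀ a ∈ J, ∀ g ∈ G, br a g ∈ J) → J = ⊥ ∨ J = G) ∧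
        ∃ x ∈ G, ∃ y ∈ G, br x y ≠ 0) :
    letI := subLieRing br hLeib G hGclosed hGanti
    letI := subLieAlgebra br hLeib G hGclosed hGanti
    LieAlgebra.IsSimple ℂ G := by
  let := subLieRing br hLeib G hGclosed hGanti
  let := subLieAlgebra br hLeib G hGclosed hGanti
  refine ⟨fun J => ?_, fun h => ?_⟩
  · have hmap := hGsimple.1 ((J : Submodule ℂ G).map G.subtype) (Submodule.map_subtype_le _ _) (by
      rintro _ ⟨a, ha, rfl⟩ g hg
      exact ⟨⁅a, (⟨g, hg⟩ : G)⁆, lie_mem_left ℂ G J a _ ha, rfl⟩)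
    rcases hmap with h | h
    · left
      rw [← LieSubmodule.toSubmodule_eq_bot]
      apply Submodule.map_injective_of_injective G.subtype_injective
      rw [Submodule.map_bot]
      exact h
    · right
      rw [← LieSubmodule.toSubmodule_eq_top]
      apply Submodule.map_injective_of_injective G.subtype_injective
      rw [Submodule.map_subtype_top]
      exact h
  · obtain ⟨x, hx, y, hy, hxy⟩ := hGsimple.2
    exact hxy (congrArg Subtype.val (h.trivial (⟨x, hx⟩ : G) (⟨y, hy⟩ : G)))

/-- Derivations of the simple Lie algebra `G` are inner. -/
lemma exists_inner_of_derivation [FiniteDimensional ℂ L]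
    (hLeib : ∀ x y z : L, br x (br y z) = br (br x y) z - br (br x z) y)
    (G : Submodule ℂ L)
    (hGclosed : ∀ x ∈ G, ∀ y ∈ G, br x y ∈ G)
    (hGanti : ∀ x ∈ G, ∀ y ∈ G, br x y = - br y x)
    (hGsimple :
        (∀ J : Submodule ℂ L, J ≤ G → (∀ a ∈ J, ∀ g ∈ G, br a g ∈ J) → J = ⊥ ∨ J = G) ∧
        ∃ x ∈ G, ∃ y ∈ G, br x y ≠ 0)
    (δ : G →ₗ[ℂ] L) (hδ : ∀ g, δ g ∈ G)
    (hder : ∀ (x y : G) (hxy : br x y ∈ G), δ ⟨br x y, hxy⟩ = br (δ x) y + br x (δ y)) :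
    ∃ a ∈ G, ∀ g : G, δ g = br g a := by
  let := subLieRing br hLeib G hGclosed hGanti
  let := subLieAlgebra br hLeib G hGclosed hGanti
  have := sub_isSimple br hLeib G hGclosed hGanti hGsimple
  let D : LieDerivation ℂ G G :=
    { toLinearMap := δ.codRestrict G hδ
      leibniz' := fun x y => Subtype.ext (by
        change δ ⟨br x y, _⟩ = br x (δ y) - br y (δ x)
        rw [hder, hGanti y y.2 _ (hδ x)]
        abel) }
  obtain ⟨a, ha⟩ := LieDerivation.IsKilling.exists_eq_ad D
  refine ⟨-a, G.neg_mem a.2, fun g => ?_⟩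
  have h : (⁅a, g⁆ : G) = D g := by rw [← ha, LieDerivation.ad_apply_apply]
  have h' : br a g = δ g := congrArg Subtype.val h
  rw [← h', map_neg, hGanti g g.2 a a.2, neg_neg]

/-- Every `G`-stable subspace is a finite direct sum of irreducible ones, by Weyl's theorem. -/
lemma exists_irreducible_decomposition [FiniteDimensional ℂ L]
    (hLeib : ∀ x y z : L, br x (br y z) = br (br x y) z - br (br x z) y)
    (G : Submodule ℂ L)
    (hGclosed : ∀ x ∈ G, ∀ y ∈ G, br x y ∈ G)
    (hGanti : ∀ x ∈ G, ∀ y ∈ G, br x y = - br y x)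
    (hGsimple :
        (∀ J : Submodule ℂ L, J ≤ G → (∀ a ∈ J, ∀ g ∈ G, br a g ∈ J) → J = ⊥ ∨ J = G) ∧
        ∃ x ∈ G, ∃ y ∈ G, br x y ≠ 0)
    (I : Submodule ℂ L)
    (hI : ∀ v ∈ I, ∀ g ∈ G, br v g ∈ I) :
    ∃ s : ℕ, ∃ Ifam : Fin s → Submodule ℂ L,
      (∀ i, Ifam i ≤ I ∧ IsIrreducibleRightModule br G (Ifam i)) ∧
      iSupIndep Ifam ∧ (⨆ i, Ifam i) = I := by
  let := subLieRing br hLeib G hGclosed hGanti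
  let := subLieAlgebra br hLeib G hGclosed hGanti
  let := subLieRingModule br hLeib G hGclosed hGanti
  have := subLieModule br hLeib G hGclosed hGanti
  have := sub_isSimple br hLeib G hGclosed hGanti hGsimple
  have hbr (g : G) (v : L) : ⁅g, v⁆ = - br v g := rfl
  -- Subspaces stable under the right action are exactly the Lie submodules.
  let mk (W : Submodule ℂ L) (hW : ∀ v ∈ W, ∀ g ∈ G, br v g ∈ W) : LieSubmodule ℂ G L :=
    { W with lie_mem := fun {g v} hv => W.neg_mem (hW v hv g g.2) }
  have hmk (W : Submodule ℂ L) (hW) : (mk W hW : Submodule ℂ L) = W := rfl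
  have := weyl_complementedLattice (K := ℂ) (𝔤 := G) L
  obtain ⟨S, hind, hsup, hatom⟩ := exists_sSupIndep_of_sSup_atoms (mk I hI) (by
    have := (isLUB_atoms_le (mk I hI)).sSup_eq
    simpa only [and_comm] using this)
  have hfin : S.Finite := WellFoundedGT.finite_of_sSupIndep hind
  obtain ⟨s, ⟨e⟩⟩ := @Finite.exists_equiv_fin S hfin.to_subtype
  let F (i : Fin s) : LieSubmodule ℂ G L := (e.symm i : LieSubmodule ℂ G L)
  have hFatom (i) : IsAtom (F i) := hatom (e.symm i).2
  have hFind : iSupIndep F := by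
    have := (sSupIndep_iff S).mp hind
    exact this.comp e.symm.injective
  have hFsup : (⨆ i, F i) = mk I hI := by
    rw [← hsup, sSup_eq_iSup']
    exact e.symm.iSup_comp (g := fun x : S => (x : LieSubmodule ℂ G L))
  refine ⟨s, fun i => F i, fun i => ⟨?_, ?_, ?_, ?_⟩, LieSubmodule.iSupIndep_toSubmodule.mpr hFind,
    ?_⟩
  · have : F i ≤ mk I hI := hFsup ▸ le_iSup F i
    exact this
  · exact fun h => (hFatom i).1 ((LieSubmodule.toSubmodule_eq_bot _).mp h)
  · intro v hv g hg
    have h : ⁅(⟨g, hg⟩ : G), v⁆ ∈ F i := (F i).lie_mem hv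
    rw [hbr] at h
    exact (neg_mem_iff (H := F i)).mp h
  · intro W' hle hW'
    have hle' : mk W' hW' ≤ F i := hle
    rcases (hFatom i).le_iff.mp hle' with h | h
    · left
      rw [← hmk W' hW', h, LieSubmodule.bot_toSubmodule]
    · right
      exact congrArg LieSubmodule.toSubmodule h
  · rw [← LieSubmodule.iSup_toSubmodule, hFsup]

/-- A form of Schur's lemma: if `α` commutes with the right action of `G` and maps the irreducible
`W` into `W ⊕ C`, then the `W`-component of `α` on `W` is a scalar. -/
lemma schur_component [FiniteDimensional ℂ L] (W C : Submodule ℂ L)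
    (hW : IsIrreducibleRightModule br G W) (hC : ∀ v ∈ C, ∀ g ∈ G, br v g ∈ C)
    (hdisj : Disjoint W C) (α : L →ₗ[ℂ] L) (hα : ∀ x y, α (br x y) = br (α x) y)
    (hαW : ∀ v ∈ W, α v ∈ W ⊔ C) :
    ∃ c : ℂ, ∀ v ∈ W, α v - c • v ∈ C := by
  obtain ⟨C', hCC', hcompl⟩ := hdisj.symm.exists_isCompl
  let T : W →ₗ[ℂ] W := W.projectionOnto C' hcompl.symm ∘ₗ α ∘ₗ W.subtype
  have hT (w : W) : α w - T w ∈ C := by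
    obtain ⟨w', hw', c, hc, h⟩ := Submodule.mem_sup.mp (hαW w w.2)
    have : T w = ⟨w', hw'⟩ := by
      change W.projectionOnto C' hcompl.symm (α w) = _
      rw [← h, map_add, Submodule.projectionOnto_apply_of_mem_left _ hw',
        Submodule.projectionOnto_apply_of_mem_right _ (hCC' hc), add_zero]
    rw [this, ← h]
    simpa using hc
  have : Nontrivial W := (Submodule.nontrivial_iff_ne_bot).mpr hW.1
  obtain ⟨c, hc⟩ := Module.End.exists_eigenvalue T
  obtain ⟨w, hw⟩ := hc.exists_hasEigenvector
  refine ⟨c, ?_⟩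
  -- The vectors of `W` satisfying the conclusion form a nonzero `G`-stable subspace.
  have h := hW.2.2 (W ⊓ C.comap (α - c • LinearMap.id)) inf_le_left (by
    rintro v ⟨hv, hv'⟩ g hg
    refine ⟨hW.2.1 v hv g hg, ?_⟩
    have := hC _ hv' g hg
    simpa [hα] using this)
  rcases h with h | h
  · exfalso
    have hmem : (w : L) ∈ W ⊓ C.comap (α - c • LinearMap.id) := by
      refine ⟨w.2, ?_⟩
      have := hT w
      rw [hw.apply_eq_smul] at this
      simpa using this
    rw [h, Submodule.mem_bot] at hmem
    exact hw.2 (Subtype.ext hmem)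
  · intro v hv
    rw [← h] at hv
    simpa using hv.2

end Leibniz

/-- For a finite-dimensional complex semisimple Leibniz algebra with
`L/I` simple (i.e. `L = G ⊕ I` with `G` a simple Lie subalgebra), every derivation is
`R_a + α + Δ`; moreover `I` is a direct sum of irreducible `G`-modules `I_i` and the
diagonal components of `α` act as scalars `λ_i` on the `I_i`
(i.e. `α v - λ_i • v` lies in the sum of the other summands for `v ∈ I_i`). -/
theorem derivation_of_semisimple_leibniz_simple_quotient
    {L : Type*} [AddCommGroup L] [Module ℂ L] [FiniteDimensional ℂ L]
    (br : L →ₗ[ℂ] L →ₗ[ℂ] L)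
    (hLeib : ∀ x y z : L, br x (br y z) = br (br x y) z - br (br x z) y)
    (G : Submodule ℂ L)
    (hGclosed : ∀ x ∈ G, ∀ y ∈ G, br x y ∈ G)
    (hGanti : ∀ x ∈ G, ∀ y ∈ G, br x y = - br y x)
    (hGsimpleLie :
      (∀ J : Submodule ℂ L, J ≤ G → (∀ a ∈ J, ∀ g ∈ G, br a g ∈ J) → J = ⊥ ∨ J = G) ∧
      ∃ x ∈ G, ∃ y ∈ G, br x y ≠ 0)
    (hdirect : G ⊓ squaresIdeal br = ⊥ ∧ G ⊔ squaresIdeal br = ⊤)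
    (d : L →ₗ[ℂ] L)
    (hd : ∀ x y : L, d (br x y) = br (d x) y + br x (d y)) :
    ∃ a ∈ G, ∃ α Δ : L →ₗ[ℂ] L,
      d = br.flip a + α + Δ ∧
      (∀ g ∈ G, α g = 0) ∧
      (∀ v ∈ squaresIdeal br, α v ∈ squaresIdeal br) ∧
      (∀ v ∈ squaresIdeal br, Δ v = 0) ∧
      (∀ g ∈ G, Δ g ∈ squaresIdeal br) ∧
      (∀ x y : L, α (br x y) = br (α x) y) ∧
      ∃ s : ℕ, ∃ Ifam : Fin s → Submodule ℂ L,
        (∀ i, Ifam i ≤ squaresIdeal br ∧ IsIrreducibleRightModule br G (Ifam i)) ∧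
        iSupIndep Ifam ∧ (⨆ i, Ifam i) = squaresIdeal br ∧
        ∃ lam : Fin s → ℂ, ∀ i, ∀ v ∈ Ifam i,
          α v - lam i • v ∈ ⨆ j, ⨆ _ : j ≠ i, Ifam j := by
  set I := squaresIdeal br with hIdef
  have hI : IsLeibnizIdeal br I := isLeibnizIdeal_squaresIdeal br
  have hann (x v : L) (hv : v ∈ I) : br x v = 0 := br_squaresIdeal_eq_zero br hLeib x v hv
  have hcompl : IsCompl G I := ⟨disjoint_iff.mpr hdirect.1, codisjoint_iff.mpr hdirect.2⟩
  let pG : L →ₗ[ℂ] L := G.projection I hcompl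
  let pI : L →ₗ[ℂ] L := I.projection G hcompl.symm
  have pG_mem (x : L) : pG x ∈ G := Submodule.projection_apply_mem hcompl x
  have pI_mem (x : L) : pI x ∈ I := Submodule.projection_apply_mem hcompl.symm x
  have pG_G (x : L) (hx : x ∈ G) : pG x = x := Submodule.projection_apply_of_mem_left hcompl hx
  have pI_I (x : L) (hx : x ∈ I) : pI x = x :=
    Submodule.projection_apply_of_mem_left hcompl.symm hx
  have pG_I (x : L) (hx : x ∈ I) : pG x = 0 := Submodule.projection_apply_of_mem_right hcompl hx
  have pI_G (x : L) (hx : x ∈ G) : pI x = 0 :=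
    Submodule.projection_apply_of_mem_right hcompl.symm hx
  have pGI (x : L) : pG x + pI x = x := by
    obtain ⟨g, hg, v, hv, rfl⟩ :=
      Submodule.mem_sup.mp (hcompl.sup_eq_top ▸ Submodule.mem_top (x := x))
    rw [map_add, map_add, pG_G g hg, pG_I v hv, pI_G g hg, pI_I v hv, add_zero, zero_add]
  -- Only the `G`-component of the second argument matters, and `pG` is multiplicative.
  have br_pG (x y : L) : br x y = br x (pG y) := by
    conv_lhs => rw [← pGI y, map_add, hann x _ (pI_mem y), add_zero]
  have pG_br (x y : L) : pG (br x y) = br (pG x) (pG y) := by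
    rw [br_pG]
    conv_lhs => rw [← pGI x, map_add, LinearMap.add_apply, map_add,
      pG_G _ (hGclosed _ (pG_mem x) _ (pG_mem y)), pG_I _ (hI.1 _ (pI_mem x) _), add_zero]
  -- The `G`-component of `d` restricted to `G` is a derivation of `G`, hence inner.
  obtain ⟨a, haG, ha⟩ := exists_inner_of_derivation br hLeib G hGclosed hGanti hGsimpleLie
    (pG ∘ₗ d ∘ₗ G.subtype) (fun g => pG_mem _) (by
      intro x y hxy
      change pG (d (br x y)) = br (pG (d x)) y + br x (pG (d y))
      rw [hd, map_add, pG_br, pG_br, pG_G x x.2, pG_G y y.2])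
  -- The derivation `d' = d - R_a` maps `L` into `I`; its restrictions to `I` and to `G`,
  -- extended by zero, are `α` and `Δ`.
  let d' : L →ₗ[ℂ] L := d - br.flip a
  have hd'app (x : L) : d' x = d x - br x a := rfl
  have hd' (x y : L) : d' (br x y) = br (d' x) y + br x (d' y) := by
    simp only [hd'app, hd, map_sub, LinearMap.sub_apply, hLeib]
    abel
  have hd'I (v : L) (hv : v ∈ I) : d' v ∈ I := derivation_mem_squaresIdeal br d' hd' v hv
  have hd'G (g : L) (hg : g ∈ G) : d' g ∈ I := by
    have h1 : pG (d g) = br g a := ha ⟨g, hg⟩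
    have h2 : d' g = pI (d g) := by
      rw [hd'app, ← h1, sub_eq_iff_eq_add, add_comm]
      exact (pGI _).symm
    rw [h2]
    exact pI_mem _
  have hα (x y : L) : d' (pI (br x y)) = br (d' (pI x)) y := by
    have h1 : pI (br x y) = br (pI x) (pG y) := by
      rw [br_pG]
      conv_lhs => rw [← pGI x, map_add, LinearMap.add_apply, map_add,
        pI_G _ (hGclosed _ (pG_mem x) _ (pG_mem y)), pI_I _ (hI.1 _ (pI_mem x) _), zero_add]
    rw [h1, hd', hann _ _ (hd'G _ (pG_mem y)), add_zero, ← br_pG]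
  obtain ⟨s, Ifam, hirr, hind, hsup⟩ := exists_irreducible_decomposition br hLeib G hGclosed hGanti
    hGsimpleLie I (fun v hv g _ => hI.1 v hv g)
  have hschur (i : Fin s) : ∃ c : ℂ, ∀ v ∈ Ifam i,
      (d' ∘ₗ pI) v - c • v ∈ ⨆ j, ⨆ _ : j ≠ i, Ifam j := by
    refine schur_component br G (Ifam i) _ (hirr i).2 ?_ (hind i) (d' ∘ₗ pI) hα ?_
    · intro v hv g hg
      have hle : (⨆ j, ⨆ _ : j ≠ i, Ifam j) ≤ (⨆ j, ⨆ _ : j ≠ i, Ifam j).comap (br.flip g) :=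
        iSup₂_le fun j hj w hw =>
          Submodule.mem_iSup_of_mem j (Submodule.mem_iSup_of_mem hj ((hirr j).2.2.1 w hw g hg))
      exact hle hv
    · intro v _
      have h : Ifam i ⊔ ⨆ j, ⨆ _ : j ≠ i, Ifam j = I := by
        rw [← hsup, iSup_split_single Ifam i]
      rw [h]
      exact hd'I _ (pI_mem v)
  choose lam hlam using hschur
  refine ⟨a, haG, d' ∘ₗ pI, d' ∘ₗ pG, ?_, ?_, ?_, ?_, ?_, hα, s, Ifam, hirr, hind, hsup, lam, hlam⟩
  · ext x
    have h : d' x = d' (pG x) + d' (pI x) := by rw [← map_add, pGI]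
    change d x = br x a + d' (pI x) + d' (pG x)
    rw [add_assoc, add_comm (d' (pI x)), ← h, hd'app]
    abel
  · intro g hg
    change d' (pI g) = 0
    rw [pI_G g hg, map_zero]
  · exact fun v _ => hd'I _ (pI_mem v)
  · intro v hv
    change d' (pG v) = 0
    rw [pG_I v hv, map_zero]
  · exact fun g _ => hd'G _ (pG_mem g)
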